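/- arXiv:2202.01278 — 2 statements merged into one kernel-verified Lean document; each statement's English description precedes it below -/
import Mathlib

section
/- Let n ≥ 3. Then the polynomial identity (d/dx)H_{2,n}^{({1,1})}(x) = 8n(n−1)(n−2)·H_{{1,1}}(x)·H_{n−3}(x) = 32n(n−1)(n−2)·(2x²+1)·H_{n−3}(x) holds for all x. -/
open Polynomial

/-- Physicists' Hermite polynomials: `H_0 = 1`, `H_n = 2x H_{n-1} - H_{n-1}'`. -/
noncomputable def hermitePhys : ℕ → Polynomial ℝ
  | 0 => 1
  | n + 1 => 2 * Polynomial.X * hermitePhys n - Polynomial.derivative (hermitePhys n)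

/-- Exceptional `X_2`-Hermite polynomial for the partition `{1,1}`. -/
noncomputable def XHerm (n : ℕ) (x : ℝ) : ℝ :=
  Matrix.det
    !![2 * x, 4 * x ^ 2 - 2, (hermitePhys n).eval x;
       2, 8 * x, ((hermitePhys n).derivative).eval x;
       0, 8, ((hermitePhys n).derivative.derivative).eval x]

/-!
Differentiating a Wronskian differentiates its last row only: differentiating any other row produces
two equal rows. In `W(H₁, H₂, Hₙ)` the new last row is `(0, 0, D³Hₙ)`, because `H₁` and `H₂` have
degree less than 3, so the derivative is `W(H₁, H₂) * D³Hₙ`. The relation `D Hₙ = 2 n Hₙ₋₁`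
evaluates the last factor.
-/

section Wronskian

variable {R : Type*} [CommRing R]

theorem derivative_det {ι : Type*} [Fintype ι] [DecidableEq ι] (A : Matrix ι ι R[X]) :
    derivative A.det = ∑ i, (A.updateRow i fun j => derivative (A i j)).det := by
  have prod_updateRow (σ : Equiv.Perm ι) (i : ι) :
      ∏ k, A.updateRow i (fun j => derivative (A i j)) k (σ k) =
        (∏ k ∈ Finset.univ.erase i, A k (σ k)) * derivative (A i (σ i)) := by
    rw [← Finset.prod_erase_mul _ _ (Finset.mem_univ i), Matrix.updateRow_self]
    congr 1
    refine Finset.prod_congr rfl fun k hk => ?_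
    rw [Matrix.updateRow_ne (Finset.ne_of_mem_erase hk)]
  calc derivative A.det
      = ∑ σ : Equiv.Perm ι, Equiv.Perm.sign σ •
          ∑ i, (∏ k ∈ Finset.univ.erase i, A k (σ k)) * derivative (A i (σ i)) := by
        simp only [← A.det_transpose, Matrix.det_apply, Matrix.transpose_apply, derivative_sum,
          Units.smul_def, derivative_smul, derivative_prod_finset]
    _ = ∑ i, ∑ σ : Equiv.Perm ι, Equiv.Perm.sign σ •
          ((∏ k ∈ Finset.univ.erase i, A k (σ k)) * derivative (A i (σ i))) := by
        simp only [Finset.smul_sum]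
        exact Finset.sum_comm
    _ = ∑ i, (A.updateRow i fun j => derivative (A i j)).det := by
        refine Finset.sum_congr rfl fun i _ => ?_
        rw [← Matrix.det_transpose, Matrix.det_apply]
        simp only [Matrix.transpose_apply, prod_updateRow]

/-- The matrix whose `(i, j)` entry is the `i`-th derivative of `f j`. Its determinant is the
Wronskian of the family `f`. -/
noncomputable def wronskianMatrix {n : ℕ} (f : Fin n → R[X]) : Matrix (Fin n) (Fin n) R[X] :=
  Matrix.of fun i j => derivative^[i] (f j)

theorem derivative_wronskianMatrix_apply {n : ℕ} (f : Fin n → R[X]) (i j : Fin n) :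
    derivative (wronskianMatrix f i j) = derivative^[i + 1] (f j) :=
  (Function.iterate_succ_apply' _ _ _).symm

theorem derivative_det_wronskianMatrix {n : ℕ} (f : Fin (n + 1) → R[X]) :
    derivative (wronskianMatrix f).det =
      ((wronskianMatrix f).updateRow (Fin.last n) fun j => derivative^[n + 1] (f j)).det := by
  have det_updateRow_castSucc (i : Fin n) : ((wronskianMatrix f).updateRow i.castSucc
      fun j => derivative^[i.castSucc + 1] (f j)).det = 0 := by
    have castSucc_ne_succ : i.castSucc ≠ i.succ := Fin.castSucc_lt_succ.ne
    refine Matrix.det_zero_of_row_eq castSucc_ne_succ ?_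
    rw [Matrix.updateRow_self, Matrix.updateRow_ne castSucc_ne_succ.symm]
    rfl
  simp only [derivative_det, derivative_wronskianMatrix_apply, Fin.sum_univ_castSucc,
    det_updateRow_castSucc, Finset.sum_const_zero, zero_add, Fin.val_last]

theorem derivative_det_wronskianMatrix_of_iterate_derivative_eq_zero {n : ℕ}
    (f : Fin (n + 1) → R[X]) (hf : ∀ j : Fin n, derivative^[n + 1] (f j.castSucc) = 0) :
    derivative (wronskianMatrix f).det =
      (wronskianMatrix (Fin.init f)).det * derivative^[n + 1] (f (Fin.last n)) := by
  have minor_eq : ((wronskianMatrix f).updateRow (Fin.last n)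
      fun j => derivative^[n + 1] (f j)).submatrix Fin.castSucc Fin.castSucc =
        wronskianMatrix (Fin.init f) := by
    ext1 i j
    rw [Matrix.submatrix_apply, Matrix.updateRow_ne i.castSucc_ne_last]
    rfl
  rw [derivative_det_wronskianMatrix, Matrix.det_succ_row _ (Fin.last n)]
  simp only [Fin.sum_univ_castSucc, Matrix.updateRow_self, hf, mul_zero, zero_mul,
    Finset.sum_const_zero, zero_add, Fin.succAbove_last, minor_eq, (Even.add_self _).neg_one_pow,
    one_mul]
  exact mul_comm _ _

end Wronskian

theorem hermitePhys_succ (n : ℕ) :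
    hermitePhys (n + 1) = 2 * X * hermitePhys n - derivative (hermitePhys n) :=
  rfl

theorem hermitePhys_one : hermitePhys 1 = 2 * X := by
  simp [hermitePhys]

theorem derivative_hermitePhys_one : derivative (hermitePhys 1) = 2 := by
  simp [hermitePhys_one]

theorem hermitePhys_two : hermitePhys 2 = 4 * X ^ 2 - 2 := by
  rw [hermitePhys_succ, derivative_hermitePhys_one, hermitePhys_one]
  ring

theorem derivative_hermitePhys_succ (n : ℕ) :
    derivative (hermitePhys (n + 1)) = 2 * ((n : ℝ[X]) + 1) * hermitePhys n := by
  induction n with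
  | zero => simp [hermitePhys]
  | succ n ih =>
    have second_derivative : derivative (derivative (hermitePhys (n + 1))) =
        2 * ((n : ℝ[X]) + 1) * derivative (hermitePhys n) := by
      rw [ih]
      simp
    calc derivative (hermitePhys (n + 1 + 1))
        = 2 * hermitePhys (n + 1) + 2 * X * derivative (hermitePhys (n + 1)) -
            derivative (derivative (hermitePhys (n + 1))) := by
          rw [hermitePhys_succ (n + 1)]
          simp
      _ = 2 * hermitePhys (n + 1) +
            2 * ((n : ℝ[X]) + 1) * (2 * X * hermitePhys n - derivative (hermitePhys n)) := by
          rw [second_derivative, ih]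
          ring
      _ = 2 * (((n + 1 : ℕ) : ℝ[X]) + 1) * hermitePhys (n + 1) := by
          rw [← hermitePhys_succ]
          push_cast
          ring

theorem derivative_hermitePhys (n : ℕ) :
    derivative (hermitePhys n) = 2 * (n : ℝ[X]) * hermitePhys (n - 1) := by
  cases n with
  | zero => simp [hermitePhys]
  | succ n => simp [derivative_hermitePhys_succ]

theorem derivative_hermitePhys_two : derivative (hermitePhys 2) = 8 * X := by
  rw [derivative_hermitePhys_succ, hermitePhys_one]
  push_cast
  ring

theorem iterate_derivative_hermitePhys (n k : ℕ) :
    derivative^[k] (hermitePhys n) =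
      2 ^ k * (n.descFactorial k : ℝ[X]) * hermitePhys (n - k) := by
  induction k with
  | zero => simp
  | succ k ih =>
    have derivative_const_mul : derivative
        (2 ^ k * (n.descFactorial k : ℝ[X]) * hermitePhys (n - k)) =
          2 ^ k * (n.descFactorial k : ℝ[X]) * derivative (hermitePhys (n - k)) := by
      simp
    rw [Function.iterate_succ_apply', ih, derivative_const_mul, derivative_hermitePhys,
      Nat.sub_sub, Nat.descFactorial_succ]
    push_cast
    ring

theorem XHerm_eq_eval_det_wronskianMatrix (n : ℕ) :
    XHerm n = fun x =>
      (wronskianMatrix ![hermitePhys 1, hermitePhys 2, hermitePhys n]).det.eval x := by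
  funext x
  have eval_one : (hermitePhys 1).eval x = 2 * x := by simp [hermitePhys_one]
  have eval_two : (hermitePhys 2).eval x = 4 * x ^ 2 - 2 := by simp [hermitePhys_two]
  rw [XHerm, ← coe_evalRingHom, RingHom.map_det]
  congr 1
  ext i j
  fin_cases i <;> fin_cases j <;>
    simp [wronskianMatrix, derivative_hermitePhys_one, derivative_hermitePhys_two, eval_one,
      eval_two]

theorem det_wronskianMatrix_hermitePhys_one_two :
    (wronskianMatrix ![hermitePhys 1, hermitePhys 2]).det = 4 * (2 * X ^ 2 + 1) := by
  have det_eq : (wronskianMatrix ![hermitePhys 1, hermitePhys 2]).det =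
      hermitePhys 1 * derivative (hermitePhys 2) - hermitePhys 2 * derivative (hermitePhys 1) :=
    Matrix.det_fin_two _
  rw [det_eq, derivative_hermitePhys_one, derivative_hermitePhys_two, hermitePhys_one,
    hermitePhys_two]
  ring

theorem derivative_det_wronskianMatrix_hermitePhys (n : ℕ) :
    derivative (wronskianMatrix ![hermitePhys 1, hermitePhys 2, hermitePhys n]).det =
      4 * (2 * X ^ 2 + 1) * (2 ^ 3 * (n.descFactorial 3 : ℝ[X]) * hermitePhys (n - 3)) := by
  have third_derivative_eq_zero (j : Fin 2) : derivative^[3]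
      (![hermitePhys 1, hermitePhys 2, hermitePhys n] j.castSucc) = 0 := by
    fin_cases j <;> simp [iterate_derivative_hermitePhys]
  have init_eq : Fin.init ![hermitePhys 1, hermitePhys 2, hermitePhys n] =
      ![hermitePhys 1, hermitePhys 2] := by
    funext j
    fin_cases j <;> rfl
  rw [derivative_det_wronskianMatrix_of_iterate_derivative_eq_zero _ third_derivative_eq_zero,
    init_eq, det_wronskianMatrix_hermitePhys_one_two, ← iterate_derivative_hermitePhys]
  rfl

theorem stmt12 (n : ℕ) (hn : 3 ≤ n) :
    ∀ x : ℝ,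
      deriv (XHerm n) x =
          8 * (n : ℝ) * ((n : ℝ) - 1) * ((n : ℝ) - 2) *
            (4 * (2 * x ^ 2 + 1)) * (hermitePhys (n - 3)).eval x ∧
      deriv (XHerm n) x =
          32 * (n : ℝ) * ((n : ℝ) - 1) * ((n : ℝ) - 2) *
            (2 * x ^ 2 + 1) * (hermitePhys (n - 3)).eval x := by
  intro x
  have cast_descFactorial : (n.descFactorial 3 : ℝ) = n * (n - 1) * (n - 2) := by
    rw [← descPochhammer_eval_eq_descFactorial]
    simp [descPochhammer_succ_eval]
  have deriv_eq : deriv (XHerm n) x = 4 * (2 * x ^ 2 + 1) *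
      (2 ^ 3 * (n.descFactorial 3 : ℝ) * (hermitePhys (n - 3)).eval x) := by
    rw [XHerm_eq_eval_det_wronskianMatrix, Polynomial.deriv,
      derivative_det_wronskianMatrix_hermitePhys]
    simp
  rw [deriv_eq, cast_descFactorial]
  constructor <;> ring
end

section
/- Let n ≥ 3. Let y_1,…,y_{n−3} ∈ ℝ list the roots of the physicists' Hermite polynomial H_{n−3} with multiplicity, i.e., H_{n−3}(X) = 2^{n−3}·∏_{j=1}^{n−3}(X−y_j). Set U_1 = i/√2, U_2 = −i/√2, and U_{j} = y_{j−2} for 3 ≤ j ≤ n−1. For x ∈ ℂ let M(x) be the n×n matrix whose j-th row, for 1 ≤ j ≤ n−1, is (1, U_j, U_j², …, U_j^{n−1}), and whose last row is (1, x/2, x²/3, …, x^{n−1}/n). Then for every x ∈ ℂ, (∏_{1≤i<j≤n−1}(U_j−U_i))·H_{2,n}^{({1,1})}(x) = 2^{n+3}·n(n−1)(n−2)·x·det M(x) + 16(n−1)(n−2)·H_{n−2}(0)·(∏_{1≤i<j≤n−1}(U_j−U_i)); moreover the points U_1,…,U_{n−1} are pairwise distinct, so the Vandermonde factor is nonzero.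 -/
open Polynomial Finset

/-- Physicists' Hermite polynomials over `ℂ`. -/
noncomputable def hermitePhysC : ℕ → Polynomial ℂ
  | 0 => 1
  | n + 1 => 2 * Polynomial.X * hermitePhysC n - Polynomial.derivative (hermitePhysC n)

/-- Exceptional `X_2`-Hermite polynomial for the partition `{1,1}` (complex variable). -/
noncomputable def XHermC (n : ℕ) (x : ℂ) : ℂ :=
  Matrix.det
    !![2 * x, 4 * x ^ 2 - 2, (hermitePhysC n).eval x;
       2, 8 * x, ((hermitePhysC n).derivative).eval x;
       0, 8, ((hermitePhysC n).derivative.derivative).eval x]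

/-!
Write `W(p)` for the Wronskian of `H₁`, `H₂` and `p`. Then `W(p)' = 4 (2X² + 1) p'''`, and since
`H_n' = 2n H_{n-1}`, the derivative of `W(H_n)` is a constant multiple of `(X² + 1/2) H_{n-3}`,
that is, of `∏ (X - U_j)`. On the other hand, `∏ (X - U_j)` times the Vandermonde determinant of `U`
is the determinant of the Vandermonde matrix bordered by the row `(1, X, …, X^{n-1})`. That
determinant is linear in its last row, so it can be integrated entrywise from `0` to `x`.

The nodes are distinct because `H_m` is separable: `H_{m+1} = 2X H_m - H_m'` and `H_{m+1}'` is a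
unit multiple of `H_m`, so coprimality of `H_m` and `H_m'` propagates from `m` to `m + 1`.
-/

section BorderedVandermonde

open Matrix

/-- The rectangular Vandermonde matrix `v i ^ k` with `N` nodes and `N + 1` powers, completed to a
square matrix by the last row `r`; its determinant is a linear functional of `r`. -/
def borderedVandermonde {R : Type*} [CommRing R] {N : ℕ} (v : Fin N → R) (r : Fin (N + 1) → R) :
    Matrix (Fin (N + 1)) (Fin (N + 1)) R :=
  Matrix.of (Fin.snoc (α := fun _ => Fin (N + 1) → R) (fun i k => v i ^ (k : ℕ)) r)

section CommRing

variable {R : Type*} [CommRing R] {N : ℕ}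

theorem det_borderedVandermonde_eq_sum (v : Fin N → R) (r : Fin (N + 1) → R) :
    (borderedVandermonde v r).det =
      ∑ k, r k * (borderedVandermonde v (Pi.single k 1)).det := by
  rw [det_eq_sum_mul_adjugate_row _ (Fin.last N)]
  refine Finset.sum_congr rfl fun k _ => ?_
  have updateRow_last : (borderedVandermonde v r).updateRow (Fin.last N) (Pi.single k 1) =
      borderedVandermonde v (Pi.single k 1) :=
    Fin.update_snoc_last (α := fun _ => Fin (N + 1) → R) r (fun i k => v i ^ (k : ℕ)) _
  rw [adjugate_apply, updateRow_last]
  simp [borderedVandermonde]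

theorem borderedVandermonde_pow (v : Fin N → R) (t : R) :
    borderedVandermonde v (fun k => t ^ (k : ℕ)) =
      vandermonde (Fin.snoc (α := fun _ => R) v t) := by
  ext i k
  cases i using Fin.lastCases <;> simp [borderedVandermonde, vandermonde_apply]

theorem det_vandermonde_snoc (v : Fin N → R) (t : R) :
    (vandermonde (Fin.snoc (α := fun _ => R) v t)).det =
      (vandermonde v).det * ∏ j, (t - v j) := by
  have det_eq_prod_Iio : ∀ {n : ℕ} (w : Fin n → R),
      (vandermonde w).det = ∏ j, ∏ i ∈ Finset.Iio j, (w j - w i) := fun w =>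
    (det_vandermonde w).trans (Finset.prod_comm' (by simp))
  have Iio_last : Finset.Iio (Fin.last N) = Finset.univ.map Fin.castSuccEmb := by
    ext i
    cases i using Fin.lastCases <;> simp
  rw [det_eq_prod_Iio, det_eq_prod_Iio, Fin.prod_univ_castSucc]
  simp [Fin.prod_Iio_castSucc, Iio_last]

end CommRing

section Field

variable {K : Type*} [Field K] {N : ℕ}

/-- The determinant of the Vandermonde matrix bordered by the row `(X^{k+1} / (k+1))ₖ`, expanded
along that row: an antiderivative of `det (vandermonde v) * ∏ (X - v j)`. -/
noncomputable def vandermondePrimitive (v : Fin N → K) : K[X] :=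
  ∑ k : Fin (N + 1),
    C ((borderedVandermonde v (Pi.single k 1)).det / ((k : K) + 1)) * X ^ ((k : ℕ) + 1)

theorem eval_vandermondePrimitive (v : Fin N → K) (x : K) :
    (vandermondePrimitive v).eval x =
      x * (borderedVandermonde v fun k => x ^ (k : ℕ) / ((k : K) + 1)).det := by
  rw [det_borderedVandermonde_eq_sum, Finset.mul_sum, vandermondePrimitive, eval_finsetSum]
  refine Finset.sum_congr rfl fun k _ => ?_
  simp only [eval_mul, eval_C, eval_pow, eval_X]
  ring

variable [CharZero K]

theorem derivative_vandermondePrimitive (v : Fin N → K) :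
    derivative (vandermondePrimitive v) = C (vandermonde v).det * ∏ j, (X - C (v j)) := by
  refine Polynomial.funext fun t => ?_
  calc (derivative (vandermondePrimitive v)).eval t
      = ∑ k : Fin (N + 1), t ^ (k : ℕ) * (borderedVandermonde v (Pi.single k 1)).det := by
        rw [vandermondePrimitive, derivative_sum, eval_finsetSum]
        refine Finset.sum_congr rfl fun k _ => ?_
        have : (k : K) + 1 ≠ 0 := Nat.cast_add_one_ne_zero _
        rw [derivative_C_mul_X_pow, Nat.add_sub_cancel, Nat.cast_succ, div_mul_cancel₀ _ this,
          eval_mul, eval_C, eval_pow, eval_X, mul_comm]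
    _ = (vandermonde v).det * ∏ j, (t - v j) := by
        rw [← det_borderedVandermonde_eq_sum, borderedVandermonde_pow, det_vandermonde_snoc]
    _ = _ := by simp [eval_prod]

theorem det_vandermonde_mul_eval_sub_eval_zero {v : Fin N → K} {F : K[X]} {c : K}
    (hF : derivative F = C c * ∏ j, (X - C (v j))) (x : K) :
    (vandermonde v).det * (F.eval x - F.eval 0) =
      c * (x * (borderedVandermonde v fun k => x ^ (k : ℕ) / ((k : K) + 1)).det) := by
  set G : K[X] := C (vandermonde v).det * F - C c * vandermondePrimitive v with hG
  have derivative_G : derivative G = 0 := by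
    rw [hG, derivative_sub, derivative_C_mul, derivative_C_mul, hF,
      derivative_vandermondePrimitive]
    ring
  have eval_G : G.eval x = G.eval 0 := by
    rw [eq_C_of_derivative_eq_zero derivative_G, eval_C, eval_C]
  simp only [hG, eval_sub, eval_mul, eval_C, eval_vandermondePrimitive, zero_mul] at eval_G
  linear_combination eval_G

end Field

end BorderedVandermonde

section Hermite

theorem hermitePhysC_eq_map (n : ℕ) : hermitePhysC n = (hermitePhys n).map (algebraMap ℝ ℂ) := by
  induction n with
  | zero => simp [hermitePhys, hermitePhysC]
  | succ n ih => simp [hermitePhys, hermitePhysC, ih, derivative_map]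

theorem hermitePhysC_succ (n : ℕ) :
    hermitePhysC (n + 1) = 2 * X * hermitePhysC n - derivative (hermitePhysC n) :=
  rfl

theorem derivative_hermitePhysC (n : ℕ) :
    derivative (hermitePhysC n) = C (2 * (n : ℂ)) * hermitePhysC (n - 1) := by
  induction n with
  | zero => simp [hermitePhysC]
  | succ n ih =>
    have derivative_pred : derivative (derivative (hermitePhysC n)) =
        C (2 * (n : ℂ)) * derivative (hermitePhysC (n - 1)) := by
      rw [ih, derivative_C_mul]
    cases n with
    | zero => simp [hermitePhysC, map_ofNat]
    | succ n =>
      rw [hermitePhysC_succ (n + 1), derivative_sub, derivative_pred, derivative_mul, ih]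
      simp only [Nat.add_sub_cancel, hermitePhysC_succ n, derivative_mul, derivative_ofNat,
        derivative_X, map_mul, map_add, map_one, map_ofNat, Nat.cast_succ]
      ring

theorem iterate_derivative_hermitePhysC (n k : ℕ) :
    derivative^[k] (hermitePhysC n) =
      C (2 ^ k * (n.descFactorial k : ℂ)) * hermitePhysC (n - k) := by
  induction k with
  | zero => simp
  | succ k ih =>
    rw [Function.iterate_succ_apply', ih, derivative_C_mul, derivative_hermitePhysC, ← mul_assoc,
      ← C_mul, Nat.sub_sub, Nat.descFactorial_succ]
    push_cast
    ring_nf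

theorem eval_zero_hermitePhysC_add_two (n : ℕ) :
    (hermitePhysC (n + 2)).eval 0 = -(2 * ((n : ℂ) + 1)) * (hermitePhysC n).eval 0 := by
  rw [hermitePhysC_succ, derivative_hermitePhysC]
  simp

theorem separable_hermitePhysC (n : ℕ) : (hermitePhysC n).Separable := by
  induction n with
  | zero => simp [hermitePhysC]
  | succ n ih =>
    have isUnit_coeff : IsUnit (C (2 * ((n + 1 : ℕ) : ℂ))) := by
      rw [isUnit_C, isUnit_iff_ne_zero]
      exact mul_ne_zero two_ne_zero (Nat.cast_ne_zero.2 n.succ_ne_zero)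
    rw [separable_def, derivative_hermitePhysC, isCoprime_mul_unit_left_right isUnit_coeff,
      Nat.add_sub_cancel, isCoprime_comm, hermitePhysC_succ, mul_comm,
      IsCoprime.mul_sub_left_right_iff]
    exact ih

section Roots

variable {m : ℕ} {y : Fin m → ℝ}

theorem hermitePhysC_eq_prod
    (hy : ∀ X : ℝ, (hermitePhys m).eval X = 2 ^ m * ∏ j, (X - y j)) :
    hermitePhysC m = C (2 ^ m) * ∏ j, (X - C (y j : ℂ)) := by
  have hermitePhys_eq_prod : hermitePhys m = C (2 ^ m) * ∏ j, (X - C (y j)) :=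
    Polynomial.funext fun t => by simp [hy, eval_prod]
  rw [hermitePhysC_eq_map, hermitePhys_eq_prod]
  simp [Polynomial.map_prod]

theorem injective_of_hermitePhys_eval_eq_prod
    (hy : ∀ X : ℝ, (hermitePhys m).eval X = 2 ^ m * ∏ j, (X - y j)) :
    Function.Injective y := by
  have separable_prod : (∏ j, (X - C (y j : ℂ))).Separable :=
    (hermitePhysC_eq_prod hy ▸ separable_hermitePhysC m).of_mul_right
  exact (separable_prod_X_sub_C_iff.1 separable_prod).of_comp (f := Complex.ofReal)

end Roots

end Hermite

section HermiteWronskian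

/-- The Wronskian of `H₁ = 2X`, `H₂ = 4X² - 2` and `p`, expanded along the column of `p`. -/
noncomputable def hermiteWronskian {R : Type*} [CommRing R] (p : R[X]) : R[X] :=
  4 * (2 * X ^ 2 + 1) * derivative (derivative p) - 16 * X * derivative p + 16 * p

theorem derivative_hermiteWronskian {R : Type*} [CommRing R] (p : R[X]) :
    derivative (hermiteWronskian p) = 4 * (2 * X ^ 2 + 1) * derivative^[3] p := by
  simp only [hermiteWronskian, derivative_add, derivative_sub, derivative_mul, derivative_ofNat,
    derivative_X_pow, derivative_X, derivative_one, Function.iterate_succ_apply,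
    Function.iterate_zero_apply, Nat.cast_ofNat, map_ofNat]
  ring

theorem XHermC_eq_eval_hermiteWronskian (n : ℕ) (x : ℂ) :
    XHermC n x = (hermiteWronskian (hermitePhysC n)).eval x := by
  simp only [XHermC, Matrix.det_fin_three, Matrix.of_apply, Matrix.cons_val, hermiteWronskian,
    eval_add, eval_sub, eval_mul, eval_pow, eval_X, eval_one, eval_ofNat]
  ring

theorem eval_zero_hermiteWronskian_hermitePhysC (n : ℕ) :
    (hermiteWronskian (hermitePhysC (n + 2))).eval 0 =
      16 * ((n : ℂ) + 1) * n * (hermitePhysC n).eval 0 := by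
  have second_derivative : derivative (derivative (hermitePhysC (n + 2))) =
      C (2 ^ 2 * (((n : ℂ) + 2) * (n + 1))) * hermitePhysC n := by
    have descFactorial_two : ((n + 2).descFactorial 2 : ℂ) = ((n : ℂ) + 2) * (n + 1) := by
      simp only [Nat.succ_descFactorial_succ, Nat.descFactorial_zero]
      push_cast
      ring
    rw [← descFactorial_two]
    exact iterate_derivative_hermitePhysC (n + 2) 2
  simp only [hermiteWronskian, second_derivative, eval_zero_hermitePhysC_add_two, eval_add,
    eval_sub, eval_mul, eval_pow, eval_C, eval_X, eval_one, eval_ofNat]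
  ring

end HermiteWronskian

section ExceptionalNodes

variable {m : ℕ}

/-- The points `U₁ = i/√2`, `U₂ = -i/√2`, followed by the real points `y`. -/
noncomputable def exceptionalNodes (y : Fin m → ℝ) : Fin (m + 2) → ℂ :=
  Fin.cons (Complex.I / (√2 : ℝ)) (Fin.cons (-(Complex.I / (√2 : ℝ))) fun j => (y j : ℂ))

theorem exceptionalNodes_injective {y : Fin m → ℝ} (hy : Function.Injective y) :
    Function.Injective (exceptionalNodes y) := by
  have im_pos : 0 < (Complex.I / (√2 : ℝ)).im := by simp
  refine Fin.cons_injective_iff.2 ⟨?_, Fin.cons_injective_iff.2 ⟨?_, ?_⟩⟩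
  · rintro ⟨j, hj⟩
    have im_eq := congrArg Complex.im hj
    cases j using Fin.cases with
    | zero =>
      rw [Fin.cons_zero, Complex.neg_im] at im_eq
      linarith
    | succ j =>
      rw [Fin.cons_succ, Complex.ofReal_im] at im_eq
      exact im_pos.ne im_eq
  · rintro ⟨j, hj⟩
    have im_eq := congrArg Complex.im hj
    rw [Complex.ofReal_im, Complex.neg_im] at im_eq
    linarith
  · exact Complex.ofReal_injective.comp hy

theorem prod_X_sub_C_exceptionalNodes (y : Fin m → ℝ) :
    ∏ j, (X - C (exceptionalNodes y j)) = (X ^ 2 + C (1 / 2)) * ∏ j, (X - C (y j : ℂ)) := by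
  have sq_eq : (Complex.I / (√2 : ℝ)) ^ 2 = -(1 / 2) := by
    rw [div_pow, Complex.I_sq, ← Complex.ofReal_pow, Real.sq_sqrt zero_le_two, Complex.ofReal_ofNat,
      neg_div]
  have quadratic_factor :
      (X - C (Complex.I / (√2 : ℝ))) * (X - C (-(Complex.I / (√2 : ℝ)))) = X ^ 2 + C (1 / 2) := by
    rw [C_neg, ← neg_neg (1 / 2 : ℂ), ← sq_eq, C_neg, C_pow]
    ring
  rw [Fin.prod_univ_succ, Fin.prod_univ_succ, ← mul_assoc, ← quadratic_factor]
  rfl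

theorem derivative_hermiteWronskian_hermitePhysC {y : Fin m → ℝ}
    (hy : ∀ X : ℝ, (hermitePhys m).eval X = 2 ^ m * ∏ j, (X - y j)) :
    derivative (hermiteWronskian (hermitePhysC (m + 3))) =
      C (2 ^ (m + 6) * ((m : ℂ) + 3) * (m + 2) * (m + 1)) *
        ∏ j, (X - C (exceptionalNodes y j)) := by
  rw [derivative_hermiteWronskian, iterate_derivative_hermitePhysC, Nat.add_sub_cancel,
    hermitePhysC_eq_prod hy, prod_X_sub_C_exceptionalNodes]
  have quadratic_factor : (4 * (2 * X ^ 2 + 1) : ℂ[X]) = C 8 * (X ^ 2 + C (1 / 2)) :=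
    Polynomial.funext fun t => by
      simp only [eval_mul, eval_add, eval_pow, eval_X, eval_C, eval_one, eval_ofNat]
      ring
  have descFactorial_three :
      ((m + 3).descFactorial 3 : ℂ) = ((m : ℂ) + 3) * (m + 2) * (m + 1) := by
    simp only [Nat.succ_descFactorial_succ, Nat.descFactorial_zero]
    push_cast
    ring
  have constant_eq : (2 : ℂ) ^ (m + 6) * (m + 3) * (m + 2) * (m + 1) =
      8 * (2 ^ 3 * ((m + 3) * (m + 2) * (m + 1))) * 2 ^ m := by
    ring
  rw [quadratic_factor, descFactorial_three, constant_eq]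
  simp only [C_mul]
  ring

theorem det_vandermonde_exceptionalNodes_mul_XHermC {y : Fin m → ℝ}
    (hy : ∀ X : ℝ, (hermitePhys m).eval X = 2 ^ m * ∏ j, (X - y j)) (x : ℂ) :
    (Matrix.vandermonde (exceptionalNodes y)).det * XHermC (m + 3) x =
      2 ^ (m + 6) * ((m : ℂ) + 3) * (m + 2) * (m + 1) * x *
          (borderedVandermonde (exceptionalNodes y) fun k => x ^ (k : ℕ) / ((k : ℂ) + 1)).det +
        16 * ((m : ℂ) + 2) * (m + 1) * (hermitePhysC (m + 1)).eval 0 *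
          (Matrix.vandermonde (exceptionalNodes y)).det := by
  have integrated := det_vandermonde_mul_eval_sub_eval_zero
    (derivative_hermiteWronskian_hermitePhysC hy) x
  rw [← XHermC_eq_eval_hermiteWronskian, eval_zero_hermiteWronskian_hermitePhysC (m + 1),
    Nat.cast_succ] at integrated
  linear_combination integrated

end ExceptionalNodes

theorem stmt14 (n : ℕ) (hn : 3 ≤ n)
    (y : Fin (n - 3) → ℝ)
    (hy : ∀ X : ℝ, (hermitePhys (n - 3)).eval X = 2 ^ (n - 3) * ∏ j, (X - y j))
    (U : Fin (n - 1) → ℂ)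
    (hU : ∀ j : Fin (n - 1), U j =
      if h : 2 ≤ (j : ℕ) then ((y ⟨(j : ℕ) - 2, by have := j.isLt; omega⟩ : ℝ) : ℂ)
      else if (j : ℕ) = 0 then Complex.I / (Real.sqrt 2 : ℂ)
      else -(Complex.I / (Real.sqrt 2 : ℂ)))
    (M : ℂ → Matrix (Fin n) (Fin n) ℂ)
    (hM : ∀ x : ℂ, M x = Matrix.of fun (i k : Fin n) =>
      if h : (i : ℕ) < n - 1 then (U ⟨i, h⟩) ^ (k : ℕ)
      else x ^ (k : ℕ) / (((k : ℕ) : ℂ) + 1)) :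
    (∀ x : ℂ,
      (∏ i : Fin (n - 1), ∏ j ∈ Finset.Ioi i, (U j - U i)) * XHermC n x =
        2 ^ (n + 3) * (n : ℂ) * ((n : ℂ) - 1) * ((n : ℂ) - 2) * x * (M x).det
          + 16 * ((n : ℂ) - 1) * ((n : ℂ) - 2) * (hermitePhysC (n - 2)).eval 0 *
              (∏ i : Fin (n - 1), ∏ j ∈ Finset.Ioi i, (U j - U i))) ∧
      Function.Injective U := by
  obtain ⟨m, rfl⟩ := Nat.exists_eq_add_of_le' hn
  have U_eq : U = exceptionalNodes (m := m) y := by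
    funext j
    rw [hU]
    cases j using Fin.cases with
    | zero => rfl
    | succ j => cases j using Fin.cases <;> rfl
  have M_eq (x : ℂ) :
      M x = borderedVandermonde (N := m + 2) U fun k => x ^ (k : ℕ) / ((k : ℂ) + 1) := by
    rw [hM]
    ext i k
    cases i using Fin.lastCases <;> simp [borderedVandermonde]
  subst U_eq
  refine ⟨fun x => ?_, exceptionalNodes_injective (injective_of_hermitePhys_eval_eq_prod hy)⟩
  rw [M_eq, ← Matrix.det_vandermonde]
  convert det_vandermonde_exceptionalNodes_mul_XHermC (m := m) hy x using 4 <;> push_cast <;> ring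
end
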